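/- arXiv:2309.05105 — 7 statements merged into one kernel-verified Lean document; each statement's English description precedes it below -/
import Mathlib

section
/- (Manne LP characterization.) For any probability mass function μ on Z, the function Q* solves the convex program: maximize ⟨μ,Q⟩ over all Q : Z → ℝ subject to Q(z) ≤ c(z) + γ Σ_{x'} P_u(x,x') Q̲(x') for every z = (x,u) ∈ Z. That is, Q* is feasible, and every feasible Q satisfies ⟨μ,Q⟩ ≤ ⟨μ,Q*⟩. -/
open Finset

/-- Manne LP characterization: for any pmf `μ` on `Z = X × U`, the fixed point `Q*` of
the discounted Bellman operator solves `max ⟨μ,Q⟩ s.t. Q(z) ≤ (T Q)(z) ∀ z`: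
`Q*` is feasible, and every feasible `Q` satisfies `⟨μ,Q⟩ ≤ ⟨μ,Q*⟩`. -/
theorem stmt3 {X U : Type*} [Fintype X] [Fintype U] [Nonempty X] [Nonempty U]
    (P : U → X → X → ℝ)
    (hP0 : ∀ u x x', 0 ≤ P u x x') (hP1 : ∀ u x, ∑ x' : X, P u x x' = 1)
    (c : X × U → ℝ) (hc : ∀ z, 0 ≤ c z)
    (γ : ℝ) (hγ0 : 0 < γ) (hγ1 : γ < 1)
    (Qstar : X × U → ℝ)
    (hQstar : ∀ x u, Qstar (x, u) = c (x, u) + γ * ∑ x' : X, P u x x' *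
      (univ.inf' univ_nonempty fun u' : U => Qstar (x', u')))
    (μ : X × U → ℝ) (hμ0 : ∀ z, 0 ≤ μ z) (hμ1 : ∑ z : X × U, μ z = 1) :
    (∀ x u, Qstar (x, u) ≤ c (x, u) + γ * ∑ x' : X, P u x x' *
      (univ.inf' univ_nonempty fun u' : U => Qstar (x', u'))) ∧
    ∀ Q : X × U → ℝ,
      (∀ x u, Q (x, u) ≤ c (x, u) + γ * ∑ x' : X, P u x x' *
        (univ.inf' univ_nonempty fun u' : U => Q (x', u'))) →
      ∑ z : X × U, μ z * Q z ≤ ∑ z : X × U, μ z * Qstar z := by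
  refine ⟨fun x u => (hQstar x u).le, fun Q hQ => ?_⟩
  obtain ⟨⟨x0, u0⟩, hM⟩ := Finite.exists_max (fun z : X × U => Q z - Qstar z)
  have key : ∀ x' : X, (univ.inf' univ_nonempty fun u' : U => Q (x', u')) ≤
      (univ.inf' univ_nonempty fun u' : U => Qstar (x', u')) +
        (Q (x0, u0) - Qstar (x0, u0)) := by
    intro x'
    obtain ⟨v, -, hv⟩ := Finset.exists_mem_eq_inf' (univ_nonempty (α := U))
      (fun u' : U => Qstar (x', u'))
    rw [hv]
    have h1 := Finset.inf'_le (fun u' : U => Q (x', u')) (mem_univ v)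
    have h2 := hM (x', v)
    linarith
  have hsum : ∑ x' : X, P u0 x0 x' * (univ.inf' univ_nonempty fun u' : U => Q (x', u')) ≤
      ∑ x' : X, P u0 x0 x' * (univ.inf' univ_nonempty fun u' : U => Qstar (x', u')) +
        (Q (x0, u0) - Qstar (x0, u0)) := by
    calc _ ≤ ∑ x' : X, P u0 x0 x' * ((univ.inf' univ_nonempty fun u' : U => Qstar (x', u')) +
        (Q (x0, u0) - Qstar (x0, u0))) :=
          Finset.sum_le_sum fun x' _ => mul_le_mul_of_nonneg_left (key x') (hP0 _ _ _)
      _ = _ := by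
          simp only [mul_add, Finset.sum_add_distrib]
          rw [← Finset.sum_mul, hP1, one_mul]
  have h3 := mul_le_mul_of_nonneg_left hsum hγ0.le
  have h4 := hQ x0 u0
  have h5 := hQstar x0 u0
  have h6 : Q (x0, u0) - Qstar (x0, u0) ≤ 0 := by
    rw [mul_add] at h3
    by_contra! h
    nlinarith
  refine Finset.sum_le_sum fun z _ => mul_le_mul_of_nonneg_left ?_ (hμ0 z)
  have h7 := hM z
  linarith
end

section
/- If the probability mass function μ on Z is strictly positive (μ(z) > 0 for all z ∈ Z), then Q* is the unique maximizer of ⟨μ,Q⟩ over feasible Q: any feasible Q with ⟨μ,Q⟩ = ⟨μ,Q*⟩ satisfies Q = Q*. -/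
open Finset

/-- If the pmf `μ` on `Z` is strictly positive, then `Q*` is the unique maximizer of
`⟨μ,Q⟩` over feasible `Q`: any feasible `Q` with `⟨μ,Q⟩ = ⟨μ,Q*⟩` equals `Q*`. -/
theorem stmt4 {X U : Type*} [Fintype X] [Fintype U] [Nonempty X] [Nonempty U]
    (P : U → X → X → ℝ)
    (hP0 : ∀ u x x', 0 ≤ P u x x') (hP1 : ∀ u x, ∑ x' : X, P u x x' = 1)
    (c : X × U → ℝ) (hc : ∀ z, 0 ≤ c z)
    (γ : ℝ) (hγ0 : 0 < γ) (hγ1 : γ < 1)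
    (Qstar : X × U → ℝ)
    (hQstar : ∀ x u, Qstar (x, u) = c (x, u) + γ * ∑ x' : X, P u x x' *
      (univ.inf' univ_nonempty fun u' : U => Qstar (x', u')))
    (μ : X × U → ℝ) (hμpos : ∀ z, 0 < μ z) (hμ1 : ∑ z : X × U, μ z = 1)
    (Q : X × U → ℝ)
    (hfeas : ∀ x u, Q (x, u) ≤ c (x, u) + γ * ∑ x' : X, P u x x' *
      (univ.inf' univ_nonempty fun u' : U => Q (x', u')))
    (hobj : ∑ z : X × U, μ z * Q z = ∑ z : X × U, μ z * Qstar z) :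
    Q = Qstar := by
  obtain ⟨⟨x₀, u₀⟩, hz⟩ := Finite.exists_max (fun z => Q z - Qstar z)
  set M := Q (x₀, u₀) - Qstar (x₀, u₀) with hM
  have hmin : ∀ x, (univ.inf' univ_nonempty fun u' : U => Q (x, u')) ≤
      (univ.inf' univ_nonempty fun u' : U => Qstar (x, u')) + M := by
    intro x
    obtain ⟨v, -, hv⟩ := exists_mem_eq_inf' (univ_nonempty (α := U)) (fun u' : U => Qstar (x, u'))
    rw [hv]
    have h1 := inf'_le (fun u' : U => Q (x, u')) (mem_univ v)
    have h2 := hz (x, v)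
    linarith
  have hsum : ∑ x' : X, P u₀ x₀ x' * (univ.inf' univ_nonempty fun u' : U => Q (x', u')) ≤
      (∑ x' : X, P u₀ x₀ x' * (univ.inf' univ_nonempty fun u' : U => Qstar (x', u'))) + M := by
    calc _ ≤ ∑ x' : X, P u₀ x₀ x' *
          ((univ.inf' univ_nonempty fun u' : U => Qstar (x', u')) + M) :=
          sum_le_sum fun x' _ => mul_le_mul_of_nonneg_left (hmin x') (hP0 _ _ _)
      _ = _ := by
          simp only [mul_add, sum_add_distrib]
          rw [← sum_mul, hP1, one_mul]
  have hM0 : M ≤ 0 := by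
    have h1 := hfeas x₀ u₀
    have h2 := hQstar x₀ u₀
    have h3 := mul_le_mul_of_nonneg_left hsum hγ0.le
    rw [mul_add] at h3
    nlinarith
  have hle : ∀ z, Q z ≤ Qstar z := fun z => by
    have h := hz z
    linarith
  have hall := (sum_eq_sum_iff_of_le
    (fun z _ => mul_le_mul_of_nonneg_left (hle z) (hμpos z).le)).1 hobj
  funext z
  exact mul_left_cancel₀ (hμpos z).ne' (hall z (mem_univ z))
end

section
/- (Compactness of the constraint region.) Let X and U be nonempty finite sets, Z := X × U, let T be a row-stochastic matrix on Z with invariant pmf ϖ (ϖ(z') = Σ_z ϖ(z) T(z,z') for all z'), let c : Z → ℝ be nonnegative, γ ∈ (0,1), and ψ : Z → ℝ^d. Define Θ := {θ ∈ ℝ^d : for every z = (x,u) with ϖ(z) > 0, θᵀψ(z) ≤ c(z) + γ Σ_{z'=(x',u')} T(z,z') · min_{u'' ∈ U} θᵀψ(x',u'')}. If for every nonzero v ∈ ℝ^d there exists z ∈ Z with ϖ(z) > 0 and vᵀψ(z) < 0, then Θ is compact. -/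
open Finset

/-- Compactness of the constraint region: if for every nonzero `v ∈ ℝ^d` there exists
`z` with `ϖ(z) > 0` and `vᵀψ(z) < 0`, then the constraint set `Θ` is compact. -/
theorem stmt12 {X U : Type*} [Fintype X] [Fintype U] [Nonempty X] [Nonempty U]
    (T : X × U → X × U → ℝ)
    (hT0 : ∀ z z', 0 ≤ T z z') (hT1 : ∀ z, ∑ z' : X × U, T z z' = 1)
    (ϖ : X × U → ℝ) (hϖ0 : ∀ z, 0 ≤ ϖ z) (hϖ1 : ∑ z : X × U, ϖ z = 1)
    (hinv : ∀ z' : X × U, ϖ z' = ∑ z : X × U, ϖ z * T z z')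
    (c : X × U → ℝ) (hc : ∀ z, 0 ≤ c z)
    (γ : ℝ) (hγ0 : 0 < γ) (hγ1 : γ < 1)
    (d : ℕ) (ψ : X × U → Fin d → ℝ)
    (hpe : ∀ v : Fin d → ℝ, v ≠ 0 → ∃ z : X × U, 0 < ϖ z ∧ ∑ i, v i * ψ z i < 0) :
    IsCompact {θ : Fin d → ℝ |
      ∀ z : X × U, 0 < ϖ z →
        ∑ i, θ i * ψ z i ≤ c z + γ * ∑ z' : X × U, T z z' *
          (univ.inf' univ_nonempty fun u'' : U => ∑ i, θ i * ψ (z'.1, u'') i)} := by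
  classical
  have hlin : ∀ z : X × U, Continuous fun θ : Fin d → ℝ => ∑ i, θ i * ψ z i := by
    intro z
    fun_prop
  obtain ⟨z0, hz0⟩ : ∃ z, 0 < ϖ z := by
    by_contra! h
    have : ∑ z : X × U, ϖ z ≤ 0 := Finset.sum_nonpos fun z _ => h z
    linarith
  have hsupp : ∀ z z', 0 < ϖ z → ¬ 0 < ϖ z' → T z z' = 0 := by
    intro z z' hz hz'
    have h0 : ϖ z' = 0 := le_antisymm (not_lt.mp hz') (hϖ0 z')
    have h1 := hinv z'
    rw [h0] at h1
    have h2 := (Finset.sum_eq_zero_iff_of_nonneg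
      (fun w _ => mul_nonneg (hϖ0 w) (hT0 w z'))).mp h1.symm z (mem_univ z)
    rcases mul_eq_zero.mp h2 with h | h
    · linarith
    · exact h
  set S : Finset (X × U) := univ.filter (fun z => 0 < ϖ z) with hS
  have hSne : S.Nonempty := ⟨z0, by simp [hS, hz0]⟩
  have hmem : ∀ z, z ∈ S ↔ 0 < ϖ z := by intro z; simp [hS]
  apply Metric.isCompact_of_isClosed_isBounded
  · simp only [Set.setOf_forall]
    refine isClosed_iInter fun z => isClosed_iInter fun _ => isClosed_le (hlin z) ?_
    refine continuous_const.add (continuous_const.mul (continuous_finsetSum _ fun z' _ => ?_))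
    refine continuous_const.mul ?_
    exact Continuous.finset_inf'_apply _ fun u _ => hlin (z'.1, u)
  · let g : (Fin d → ℝ) → ℝ := fun θ => S.sup' hSne fun z => ∑ i, θ i * ψ z i
    have hg : Continuous g := Continuous.finset_sup'_apply _ fun z _ => hlin z
    have hgpos : ∀ v ∈ Metric.sphere (0 : Fin d → ℝ) 1, 0 < g v := by
      intro v hv
      have hv0 : -v ≠ 0 := by
        intro h
        have : v = 0 := neg_eq_zero.mp h
        simp [this] at hv
      obtain ⟨z, hz, hlt⟩ := hpe (-v) hv0
      have h1 : 0 < ∑ i, v i * ψ z i := by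
        simpa [Finset.sum_neg_distrib] using hlt
      exact h1.trans_le (Finset.le_sup' (fun z => ∑ i, v i * ψ z i) ((hmem z).2 hz))
    obtain ⟨δ, hδ, hδg⟩ := (isCompact_sphere (0 : Fin d → ℝ) 1).exists_forall_le'
      hg.continuousOn hgpos
    rw [isBounded_iff_forall_norm_le]
    refine ⟨((∑ z, c z) / (1 - γ)) / δ, fun θ hθ => ?_⟩
    have hC : 0 ≤ ∑ z, c z := Finset.sum_nonneg fun z _ => hc z
    have h1γ : 0 < 1 - γ := by linarith
    by_cases hθ0 : θ = 0
    · rw [hθ0, norm_zero]; positivity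
    have hn : 0 < ‖θ‖ := norm_pos_iff.mpr hθ0
    obtain ⟨z, hzS, hz⟩ := Finset.exists_mem_eq_sup' hSne fun z => ∑ i, θ i * ψ z i
    have hgM : g θ ≤ (∑ z, c z) / (1 - γ) := by
      have h1 := hθ z ((hmem z).1 hzS)
      have h2 : ∑ z' : X × U, T z z' *
          (univ.inf' univ_nonempty fun u'' : U => ∑ i, θ i * ψ (z'.1, u'') i)
          ≤ ∑ z' : X × U, T z z' * g θ := by
        refine Finset.sum_le_sum fun z' _ => ?_
        by_cases hz' : 0 < ϖ z'
        · refine mul_le_mul_of_nonneg_left ?_ (hT0 z z')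
          refine (Finset.inf'_le (fun u'' : U => ∑ i, θ i * ψ (z'.1, u'') i)
            (mem_univ z'.2)).trans ?_
          exact Finset.le_sup' (fun z => ∑ i, θ i * ψ z i) ((hmem z').2 hz')
        · rw [hsupp z z' ((hmem z).1 hzS) hz']; simp
      rw [← Finset.sum_mul, hT1, one_mul] at h2
      have h3 : c z ≤ ∑ z, c z := Finset.single_le_sum (fun w _ => hc w) (mem_univ z)
      have h4 : g θ = ∑ i, θ i * ψ z i := hz
      have h5 := mul_le_mul_of_nonneg_left h2 hγ0.le
      rw [le_div_iff₀ h1γ]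
      linarith
    have hδθ : δ ≤ g (‖θ‖⁻¹ • θ) := by
      apply hδg
      rw [mem_sphere_zero_iff_norm, norm_smul, norm_inv, norm_norm, inv_mul_cancel₀ hn.ne']
    have hsc : g (‖θ‖⁻¹ • θ) ≤ ‖θ‖⁻¹ * g θ := by
      refine Finset.sup'_le _ _ fun w hw => ?_
      have : ∑ i, (‖θ‖⁻¹ • θ) i * ψ w i = ‖θ‖⁻¹ * ∑ i, θ i * ψ w i := by
        rw [Finset.mul_sum]
        refine Finset.sum_congr rfl fun i _ => ?_
        simp [mul_assoc]
      rw [this]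
      exact mul_le_mul_of_nonneg_left
        (Finset.le_sup' (fun z => ∑ i, θ i * ψ z i) hw) (by positivity)
    have h6 : ‖θ‖ * δ ≤ g θ := by
      have := mul_le_mul_of_nonneg_left (hδθ.trans hsc) hn.le
      rwa [← mul_assoc, mul_inv_cancel₀ hn.ne', one_mul] at this
    rw [le_div_iff₀ hδ]
    exact h6.trans hgM
end

section
/- (Tight constraints transfer to the greedy policy.) Suppose θ ∈ ℝ^d satisfies ḡ(θ,φ') ≤ 0 componentwise for every deterministic policy φ' : X → U. If ḡ^i(θ,φ) = 0 for some index i ∈ {1,…,d̄} and some policy φ, then ḡ^i(θ,φ_g) = 0 for every Q^θ-greedy policy φ_g. -/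
open Finset MeasureTheory

/-- Linearly parameterized Q-function: `Q^θ(z) = θᵀψ(z)`. -/
noncomputable def Qlin {X U : Type*} {d : ℕ} (ψ : X × U → Fin d → ℝ)
    (θ : Fin d → ℝ) : X × U → ℝ :=
  fun z => ∑ i, θ i * ψ z i

/-- Temporal difference `𝒟(θ) = −Q^θ(Z) + c(Z) + γ min_u Q^θ(X',u)`. -/
noncomputable def Dtd {Ω X U : Type*} [Fintype U] [Nonempty U] {d : ℕ}
    (ψ : X × U → Fin d → ℝ) (c : X × U → ℝ) (γ : ℝ)
    (Z : Ω → X × U) (X' : Ω → X) (θ : Fin d → ℝ) (ω : Ω) : ℝ :=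
  -(Qlin ψ θ (Z ω)) + c (Z ω) +
    γ * (univ.inf' univ_nonempty fun u : U => Qlin ψ θ (X' ω, u))

/-- Temporal difference for a deterministic policy `φ`:
`𝒟(θ,φ) = −Q^θ(Z) + c(Z) + γ Q^θ(X',φ(X'))`. -/
noncomputable def DtdPol {Ω X U : Type*} {d : ℕ}
    (ψ : X × U → Fin d → ℝ) (c : X × U → ℝ) (γ : ℝ)
    (Z : Ω → X × U) (X' : Ω → X) (θ : Fin d → ℝ) (φ : X → U) (ω : Ω) : ℝ :=
  -(Qlin ψ θ (Z ω)) + c (Z ω) + γ * Qlin ψ θ (X' ω, φ (X' ω))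

/-- `ḡ(θ) := E[−𝒟(θ) ζ] ∈ ℝ^{d̄}`. -/
noncomputable def gbar {Ω X U : Type*} [MeasurableSpace Ω] [Fintype U] [Nonempty U]
    {d dbar : ℕ} (P : Measure Ω) (ψ : X × U → Fin d → ℝ) (c : X × U → ℝ) (γ : ℝ)
    (Z : Ω → X × U) (X' : Ω → X) (ζ : Ω → Fin dbar → ℝ) (θ : Fin d → ℝ) :
    Fin dbar → ℝ :=
  fun i => ∫ ω, -(Dtd ψ c γ Z X' θ ω) * ζ ω i ∂P

/-- `ḡ(θ,φ) := E[−𝒟(θ,φ) ζ] ∈ ℝ^{d̄}`. -/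
noncomputable def gbarPol {Ω X U : Type*} [MeasurableSpace Ω] {d dbar : ℕ}
    (P : Measure Ω) (ψ : X × U → Fin d → ℝ) (c : X × U → ℝ) (γ : ℝ)
    (Z : Ω → X × U) (X' : Ω → X) (ζ : Ω → Fin dbar → ℝ) (θ : Fin d → ℝ) (φ : X → U) :
    Fin dbar → ℝ :=
  fun i => ∫ ω, -(DtdPol ψ c γ Z X' θ φ ω) * ζ ω i ∂P

/-- Tight constraints transfer to the greedy policy: if `ḡ(θ,φ') ≤ 0` for every policy
`φ'`, and `ḡ^i(θ,φ) = 0` for some index `i` and some policy `φ`, then `ḡ^i(θ,φ_g) = 0`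
for every `Q^θ`-greedy policy `φ_g`. -/
theorem stmt14 {Ω X U : Type*} [MeasurableSpace Ω]
    [MeasurableSpace X] [DiscreteMeasurableSpace X]
    [MeasurableSpace U] [DiscreteMeasurableSpace U]
    [Fintype X] [Fintype U] [Nonempty X] [Nonempty U]
    (P : Measure Ω) [IsProbabilityMeasure P]
    (c : X × U → ℝ) (hc : ∀ z, 0 ≤ c z)
    (γ : ℝ) (hγ0 : 0 < γ) (hγ1 : γ < 1)
    (d dbar : ℕ) (hdbar : 1 ≤ dbar)
    (ψ : X × U → Fin d → ℝ)
    (Z : Ω → X × U) (X' : Ω → X) (hZ : Measurable Z) (hX' : Measurable X')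
    (ζ : Ω → Fin dbar → ℝ) (hζmeas : Measurable ζ)
    (hζ0 : ∀ ω i, 0 ≤ ζ ω i) (hζbdd : ∃ C : ℝ, ∀ ω i, ζ ω i ≤ C)
    (θ : Fin d → ℝ)
    (hfeas : ∀ (φ' : X → U) (i : Fin dbar), gbarPol P ψ c γ Z X' ζ θ φ' i ≤ 0)
    (i : Fin dbar) (φ : X → U) (htight : gbarPol P ψ c γ Z X' ζ θ φ i = 0) :
    ∀ φg : X → U,
      (∀ x, Qlin ψ θ (x, φg x) = univ.inf' univ_nonempty fun u : U => Qlin ψ θ (x, u)) →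
      gbarPol P ψ c γ Z X' ζ θ φg i = 0 := by
  intro φg hg
  obtain ⟨C, hC⟩ := hζbdd
  have hint : ∀ φ' : X → U,
      Integrable (fun ω => -(DtdPol ψ c γ Z X' θ φ' ω) * ζ ω i) P := by
    intro φ'
    let F : (X × U) × X → ℝ := fun p =>
      -(-(Qlin ψ θ p.1) + c p.1 + γ * Qlin ψ θ (p.2, φ' p.2))
    have hF : Measurable fun ω => F (Z ω, X' ω) :=
      (measurable_of_finite F).comp (hZ.prodMk hX')
    have hζi : Measurable fun ω => ζ ω i := (measurable_pi_apply i).comp hζmeas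
    refine Integrable.of_bound (C := (∑ p, |F p|) * C)
      (hF.mul hζi).aestronglyMeasurable (Filter.Eventually.of_forall fun ω => ?_)
    change ‖F (Z ω, X' ω) * ζ ω i‖ ≤ _
    rw [Real.norm_eq_abs, abs_mul, abs_of_nonneg (hζ0 ω i)]
    exact mul_le_mul
      (Finset.single_le_sum (f := fun p => |F p|) (fun p _ => abs_nonneg _)
        (Finset.mem_univ (Z ω, X' ω)))
      (hC ω i) (hζ0 ω i) (Finset.sum_nonneg fun p _ => abs_nonneg _)
  refine le_antisymm (hfeas φg i) ?_
  rw [← htight]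
  refine integral_mono (hint φ) (hint φg) fun ω => ?_
  refine mul_le_mul_of_nonneg_right ?_ (hζ0 ω i)
  have h1 : Qlin ψ θ (X' ω, φg (X' ω)) ≤ Qlin ψ θ (X' ω, φ (X' ω)) := by
    rw [hg]
    exact Finset.inf'_le (fun u : U => Qlin ψ θ (X' ω, u)) (Finset.mem_univ _)
  have h2 := mul_le_mul_of_nonneg_left h1 hγ0.le
  unfold DtdPol
  linarith
end

section
/- (Uniqueness of the greedy policy at a basic feasible solution.) Suppose θ ∈ ℝ^d satisfies ḡ(θ,φ') ≤ 0 componentwise for every deterministic policy φ' : X → U, and suppose the set of tight pairs {(i,φ) : 1 ≤ i ≤ d̄, φ : X → U, ḡ^i(θ,φ) = 0} has exactly d elements whose indices i are pairwise distinct, where d ≥ 1. Then Q^θ admits exactly one greedy policy: there is a unique φ : X → U with Q^θ(x,φ(x)) = min_{u ∈ U} Q^θ(x,u) for all x ∈ X. -/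
open Finset MeasureTheory

/-- Uniqueness of the greedy policy at a basic feasible solution: if `ḡ(θ,φ') ≤ 0` for
every policy `φ'`, and the set of tight pairs `{(i,φ) : ḡ^i(θ,φ) = 0}` has exactly `d`
elements whose indices are pairwise distinct (`d ≥ 1`), then `Q^θ` admits exactly one
greedy policy. -/
theorem stmt15 {Ω X U : Type*} [MeasurableSpace Ω]
    [MeasurableSpace X] [DiscreteMeasurableSpace X]
    [MeasurableSpace U] [DiscreteMeasurableSpace U]
    [Fintype X] [Fintype U] [Nonempty X] [Nonempty U]
    (P : Measure Ω) [IsProbabilityMeasure P]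
    (c : X × U → ℝ) (hc : ∀ z, 0 ≤ c z)
    (γ : ℝ) (hγ0 : 0 < γ) (hγ1 : γ < 1)
    (d dbar : ℕ) (hd : 1 ≤ d) (hdbar : 1 ≤ dbar)
    (ψ : X × U → Fin d → ℝ)
    (Z : Ω → X × U) (X' : Ω → X) (hZ : Measurable Z) (hX' : Measurable X')
    (ζ : Ω → Fin dbar → ℝ) (hζmeas : Measurable ζ)
    (hζ0 : ∀ ω i, 0 ≤ ζ ω i) (hζbdd : ∃ C : ℝ, ∀ ω i, ζ ω i ≤ C)
    (θ : Fin d → ℝ)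
    (hfeas : ∀ (φ' : X → U) (i : Fin dbar), gbarPol P ψ c γ Z X' ζ θ φ' i ≤ 0)
    (hcard : {p : Fin dbar × (X → U) | gbarPol P ψ c γ Z X' ζ θ p.2 p.1 = 0}.ncard = d)
    (hdistinct : Set.InjOn Prod.fst
      {p : Fin dbar × (X → U) | gbarPol P ψ c γ Z X' ζ θ p.2 p.1 = 0}) :
    ∃! φ : X → U,
      ∀ x, Qlin ψ θ (x, φ x) = univ.inf' univ_nonempty fun u : U => Qlin ψ θ (x, u) := by
  have hint : ∀ (φ : X → U) (i : Fin dbar),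
      Integrable (fun ω => -(DtdPol ψ c γ Z X' θ φ ω) * ζ ω i) P := by
    intro φ i
    obtain ⟨C, hC⟩ := hζbdd
    have hF : Measurable (fun p : (X × U) × X =>
        -(-(Qlin ψ θ p.1) + c p.1 + γ * Qlin ψ θ (p.2, φ p.2))) :=
      Measurable.of_discrete
    have hm : Measurable (fun ω => -(DtdPol ψ c γ Z X' θ φ ω)) :=
      hF.comp (hZ.prodMk hX')
    have hζi : Measurable (fun ω => ζ ω i) := (measurable_pi_apply i).comp hζmeas
    obtain ⟨B, hB⟩ := (Set.finite_range (fun p : (X × U) × X =>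
        |(-(-(Qlin ψ θ p.1) + c p.1 + γ * Qlin ψ θ (p.2, φ p.2)))|)).bddAbove
    refine Integrable.of_bound (hm.mul hζi).aestronglyMeasurable (B * C) ?_
    refine Filter.Eventually.of_forall fun ω => ?_
    have h1 : |-(DtdPol ψ c γ Z X' θ φ ω)| ≤ B := hB ⟨(Z ω, X' ω), rfl⟩
    rw [Real.norm_eq_abs, abs_mul, abs_of_nonneg (hζ0 ω i)]
    exact mul_le_mul h1 (hC ω i) (hζ0 ω i) ((abs_nonneg _).trans h1)
  have hne : {p : Fin dbar × (X → U) |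
      gbarPol P ψ c γ Z X' ζ θ p.2 p.1 = 0}.Nonempty := by
    apply Set.nonempty_of_ncard_ne_zero
    omega
  obtain ⟨⟨i, φ₀⟩, h0⟩ := hne
  have key : ∀ φ : X → U, (∀ x, Qlin ψ θ (x, φ x) =
      univ.inf' univ_nonempty fun u : U => Qlin ψ θ (x, u)) → φ = φ₀ := by
    intro φ hφ
    have hle : gbarPol P ψ c γ Z X' ζ θ φ₀ i ≤ gbarPol P ψ c γ Z X' ζ θ φ i := by
      refine integral_mono (hint φ₀ i) (hint φ i) fun ω => ?_
      refine mul_le_mul_of_nonneg_right ?_ (hζ0 ω i)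
      have h2 : Qlin ψ θ (X' ω, φ (X' ω)) ≤ Qlin ψ θ (X' ω, φ₀ (X' ω)) := by
        rw [hφ]
        exact Finset.inf'_le (fun u : U => Qlin ψ θ (X' ω, u)) (mem_univ _)
      have h3 := mul_le_mul_of_nonneg_left h2 hγ0.le
      unfold DtdPol
      linarith
    have h0' : gbarPol P ψ c γ Z X' ζ θ φ₀ i = 0 := h0
    have h1 : gbarPol P ψ c γ Z X' ζ θ φ i = 0 :=
      le_antisymm (hfeas φ i) (h0' ▸ hle)
    have h4 : ((i, φ) : Fin dbar × (X → U)) = (i, φ₀) := hdistinct h1 h0 rfl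
    exact congrArg Prod.snd h4
  have hex : ∀ x, ∃ u, Qlin ψ θ (x, u) =
      univ.inf' univ_nonempty fun u : U => Qlin ψ θ (x, u) := by
    intro x
    obtain ⟨u, -, hu⟩ := Finset.exists_mem_eq_inf' (univ_nonempty (α := U))
      (fun u : U => Qlin ψ θ (x, u))
    exact ⟨u, hu.symm⟩
  choose φ hφ using hex
  exact ⟨φ, hφ, fun φ' h' => (key φ' h').trans (key φ hφ).symm⟩
end

section
/- (Stability of a nondegenerate LP vertex under perturbation.) Let v ∈ ℝ^d, Ā ∈ ℝ^{d̄×d}, β̄ ∈ ℝ^{d̄} with d̄ ≥ d ≥ 1. Suppose the linear program min vᵀθ subject to Āθ ≤ β̄ has a unique optimal solution θ*; that the active set I₊ := {i : (Āθ*)_i = β̄_i} has exactly d elements; that the d×d matrix Ā⁺ formed from the rows of Ā indexed by I₊ is invertible; and that there exists λ* ∈ ℝ^{d̄} with λ* ≥ 0, Āᵀλ* = −v, λ*_i = 0 for i ∉ I₊, and λ*_i > 0 for every i ∈ I₊. Then there exists δ > 0 such that for all A ∈ ℝ^{d̄×d} and β ∈ ℝ^{d̄} with ‖A − Ā‖ <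 δ and ‖β − β̄‖ < δ, the perturbed linear program min vᵀθ subject to Aθ ≤ β has a unique optimal solution, its active set equals I₊, and this solution equals (A⁺)⁻¹ β⁺, where A⁺ and β⁺ are the rows of A and the entries of β indexed by I₊. -/
open Matrix

/-- A point `θ` is optimal for the LP `min vᵀθ s.t. Aθ ≤ β`. -/
def LPOptimal {d dbar : ℕ} (v : Fin d → ℝ) (A : Matrix (Fin dbar) (Fin d) ℝ)
    (β : Fin dbar → ℝ) (θ : Fin d → ℝ) : Prop :=
  (∀ i, A.mulVec θ i ≤ β i) ∧
    ∀ θ' : Fin d → ℝ, (∀ i, A.mulVec θ' i ≤ β i) → v ⬝ᵥ θ ≤ v ⬝ᵥ θ'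

theorem aux_det {d dbar : ℕ} (v : Fin d → ℝ) (A : Matrix (Fin dbar) (Fin d) ℝ)
    (β : Fin dbar → ℝ) (ι : Fin d → Fin dbar)
    (hdet : (A.submatrix ι id).det ≠ 0)
    (hoff : ∀ i, i ∉ Set.range ι → A.mulVec ((A.submatrix ι id)⁻¹.mulVec (β ∘ ι)) i < β i)
    (hpos : ∀ k, 0 < ((-v) ᵥ* (A.submatrix ι id)⁻¹) k) :
    ∃ θN : Fin d → ℝ,
        LPOptimal v A β θN ∧
        (∀ θ : Fin d → ℝ, LPOptimal v A β θ → θ = θN) ∧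
        {i : Fin dbar | A.mulVec θN i = β i} = Set.range ι ∧
        θN = (A.submatrix ι id)⁻¹.mulVec (β ∘ ι) := by
  have hu : IsUnit (A.submatrix ι id).det := isUnit_iff_ne_zero.mpr hdet
  set B := A.submatrix ι id with hB
  have hBA : ∀ θ k, (B *ᵥ θ) k = (A *ᵥ θ) (ι k) := fun θ k => rfl
  set μ := (-v) ᵥ* B⁻¹ with hμ
  have hμB : μ ᵥ* B = -v := by
    rw [hμ, Matrix.vecMul_vecMul, Matrix.nonsing_inv_mul _ hu, Matrix.vecMul_one]
  have hval : ∀ θ, v ⬝ᵥ θ = - (μ ⬝ᵥ (B *ᵥ θ)) := by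
    intro θ
    rw [Matrix.dotProduct_mulVec, hμB, neg_dotProduct, neg_neg]
  set θN := B⁻¹ *ᵥ (β ∘ ι) with hθ
  have hBθ : B *ᵥ θN = β ∘ ι := by
    rw [hθ, Matrix.mulVec_mulVec, Matrix.mul_nonsing_inv _ hu, Matrix.one_mulVec]
  have hon : ∀ k, (A *ᵥ θN) (ι k) = β (ι k) := fun k => by
    rw [← hBA, hBθ]; rfl
  have hopt : LPOptimal v A β θN := by
    refine ⟨fun i => ?_, fun θ' h => ?_⟩
    · by_cases hi : i ∈ Set.range ι
      · obtain ⟨k, rfl⟩ := hi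
        exact (hon k).le
      · exact (hoff i hi).le
    · rw [hval, hval, hBθ, neg_le_neg_iff]
      exact Finset.sum_le_sum fun k _ => mul_le_mul_of_nonneg_left (h (ι k)) (hpos k).le
  refine ⟨θN, hopt, fun θ h => ?_, ?_, rfl⟩
  · have h1 := h.2 θN hopt.1
    have h2 := hopt.2 θ h.1
    have h3 : μ ⬝ᵥ (B *ᵥ θ) = μ ⬝ᵥ (β ∘ ι) := by
      rw [hval θ, hval θN, hBθ] at h1 h2
      linarith
    have h4 := (Finset.sum_eq_sum_iff_of_le (s := Finset.univ)
      (f := fun k => μ k * (B *ᵥ θ) k) (g := fun k => μ k * (β ∘ ι) k)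
      (fun k _ => mul_le_mul_of_nonneg_left (h.1 (ι k)) (hpos k).le)).1 h3
    have h5 : B *ᵥ θ = β ∘ ι := by
      funext k
      exact mul_left_cancel₀ (hpos k).ne' (h4 k (Finset.mem_univ k))
    rw [hθ, ← h5, Matrix.mulVec_mulVec, Matrix.nonsing_inv_mul _ hu, Matrix.one_mulVec]
  · ext i
    constructor
    · intro h
      by_contra hi
      exact (hoff i hi).ne h
    · rintro ⟨k, rfl⟩
      exact hon k

/-- Stability of a nondegenerate LP vertex under perturbation: if the LP
`min vᵀθ s.t. Āθ ≤ β̄` has a unique optimal solution `θ*` whose active set `I₊` has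
exactly `d` elements (enumerated by the injection `ι`), the corresponding square
submatrix `Ā⁺` is invertible, and there is a dual vector `λ* ≥ 0` with `Āᵀλ* = −v`
vanishing off `I₊` and strictly positive on `I₊`, then every sufficiently small
perturbation `(A,β)` of `(Ā,β̄)` yields an LP with a unique optimal solution, with the
same active set `I₊`, equal to `(A⁺)⁻¹ β⁺`. -/
theorem stmt16 {d dbar : ℕ} (hd : 1 ≤ d) (hdd : d ≤ dbar)
    (v : Fin d → ℝ) (Abar : Matrix (Fin dbar) (Fin d) ℝ) (βbar : Fin dbar → ℝ)
    (θstar : Fin d → ℝ)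
    (hopt : LPOptimal v Abar βbar θstar)
    (huniq : ∀ θ : Fin d → ℝ, LPOptimal v Abar βbar θ → θ = θstar)
    (ι : Fin d → Fin dbar) (hι : Function.Injective ι)
    (hactive : {i : Fin dbar | Abar.mulVec θstar i = βbar i} = Set.range ι)
    (hAplus : IsUnit (Abar.submatrix ι id).det)
    (lam : Fin dbar → ℝ) (hlam0 : ∀ i, 0 ≤ lam i)
    (hdual : Abarᵀ.mulVec lam = -v)
    (hlamoff : ∀ i, i ∉ Set.range ι → lam i = 0)
    (hlamon : ∀ i, i ∈ Set.range ι → 0 < lam i) :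
    ∃ δ > (0 : ℝ), ∀ (A : Matrix (Fin dbar) (Fin d) ℝ) (β : Fin dbar → ℝ),
      (∀ i j, |A i j - Abar i j| < δ) → (∀ i, |β i - βbar i| < δ) →
      ∃ θN : Fin d → ℝ,
        LPOptimal v A β θN ∧
        (∀ θ : Fin d → ℝ, LPOptimal v A β θ → θ = θN) ∧
        {i : Fin dbar | A.mulVec θN i = β i} = Set.range ι ∧
        θN = (A.submatrix ι id)⁻¹.mulVec (β ∘ ι) := by
  let p0 : (Fin dbar → Fin d → ℝ) × (Fin dbar → ℝ) := (Abar, βbar)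
  let B : (Fin dbar → Fin d → ℝ) × (Fin dbar → ℝ) → Matrix (Fin d) (Fin d) ℝ := fun p => (Matrix.of p.1).submatrix ι id
  have hB : Continuous B := by
    refine continuous_matrix fun i j => ?_
    show Continuous fun p : (Fin dbar → Fin d → ℝ) × (Fin dbar → ℝ) => p.1 (ι i) j
    fun_prop
  have hB0u : IsUnit (B p0).det := hAplus
  have hB0 : (B p0).det ≠ 0 := hAplus.ne_zero
  have hdetc : Continuous fun p => (B p).det := hB.matrix_det
  have hinv : ContinuousAt (fun p => (B p)⁻¹) p0 := by
    simp only [Matrix.inv_def, Ring.inverse_eq_inv']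
    exact (hdetc.continuousAt.inv₀ hB0).smul hB.matrix_adjugate.continuousAt
  have hinv' : ∀ k j, ContinuousAt (fun p => (B p)⁻¹ k j) p0 := fun k j =>
    (continuous_id.matrix_elem k j).continuousAt.comp hinv
  have hθ : ∀ k, ContinuousAt (fun p : (Fin dbar → Fin d → ℝ) × (Fin dbar → ℝ) => ((B p)⁻¹ *ᵥ (p.2 ∘ ι)) k) p0 := by
    intro k
    show ContinuousAt (fun p : (Fin dbar → Fin d → ℝ) × (Fin dbar → ℝ) => ∑ j, (B p)⁻¹ k j * p.2 (ι j)) p0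
    refine tendsto_finsetSum _ fun j _ => (hinv' k j).mul ?_
    exact Continuous.continuousAt (by fun_prop)
  have hAθ : ∀ i, ContinuousAt
      (fun p : (Fin dbar → Fin d → ℝ) × (Fin dbar → ℝ) => ((Matrix.of p.1) *ᵥ ((B p)⁻¹ *ᵥ (p.2 ∘ ι))) i) p0 := by
    intro i
    show ContinuousAt (fun p : (Fin dbar → Fin d → ℝ) × (Fin dbar → ℝ) => ∑ j, p.1 i j * ((B p)⁻¹ *ᵥ (p.2 ∘ ι)) j) p0
    refine tendsto_finsetSum _ fun j _ => ContinuousAt.mul ?_ (hθ j)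
    exact Continuous.continuousAt (by fun_prop)
  have hμ : ∀ k, ContinuousAt (fun p : (Fin dbar → Fin d → ℝ) × (Fin dbar → ℝ) => ((-v) ᵥ* (B p)⁻¹) k) p0 := by
    intro k
    show ContinuousAt (fun p : (Fin dbar → Fin d → ℝ) × (Fin dbar → ℝ) => ∑ j, (-v) j * (B p)⁻¹ j k) p0
    exact tendsto_finsetSum _ fun j _ => continuousAt_const.mul (hinv' j k)
  have hθ0 : (B p0)⁻¹ *ᵥ (p0.2 ∘ ι) = θstar := by
    have h : p0.2 ∘ ι = B p0 *ᵥ θstar := by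
      funext k
      have : ι k ∈ {i : Fin dbar | Abar.mulVec θstar i = βbar i} := by
        rw [hactive]; exact ⟨k, rfl⟩
      exact this.symm
    rw [h, Matrix.mulVec_mulVec, Matrix.nonsing_inv_mul _ hB0u, Matrix.one_mulVec]
  have hμ0 : (-v) ᵥ* (B p0)⁻¹ = lam ∘ ι := by
    have h : (-v) = (lam ∘ ι) ᵥ* B p0 := by
      rw [← hdual]
      funext j
      show ∑ i, Abar i j * lam i = ∑ k, lam (ι k) * Abar (ι k) j
      symm
      refine Finset.sum_of_injOn ι hι.injOn (by simp) ?_ ?_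
      · intro i _ hi
        rw [hlamoff i (by simpa using hi), mul_zero]
      · intro k _
        exact mul_comm _ _
    rw [h, Matrix.vecMul_vecMul, Matrix.mul_nonsing_inv _ hB0u, Matrix.vecMul_one]
  have e1 : ∀ᶠ p in nhds p0, (B p).det ≠ 0 := hdetc.continuousAt.eventually_ne hB0
  have e2 : ∀ᶠ p in nhds p0, ∀ i, i ∉ Set.range ι →
      ((Matrix.of p.1) *ᵥ ((B p)⁻¹ *ᵥ (p.2 ∘ ι))) i < p.2 i := by
    rw [Filter.eventually_all]
    intro i
    by_cases hi : i ∈ Set.range ι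
    · simp [hi]
    · have hc : ContinuousAt (fun p : (Fin dbar → Fin d → ℝ) × (Fin dbar → ℝ) => p.2 i) p0 := Continuous.continuousAt (by fun_prop)
      refine ((hAθ i).eventually_lt hc ?_).mono fun p hp _ => hp
      rw [hθ0]
      refine lt_of_le_of_ne (hopt.1 i) fun h => hi ?_
      rw [← hactive]; exact h
  have e3 : ∀ᶠ p in nhds p0, ∀ k, 0 < ((-v) ᵥ* (B p)⁻¹) k := by
    rw [Filter.eventually_all]
    intro k
    refine continuousAt_const.eventually_lt (hμ k) ?_
    rw [hμ0]
    exact hlamon _ ⟨k, rfl⟩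
  obtain ⟨δ, hδ, H⟩ := Metric.eventually_nhds_iff.1 (e1.and (e2.and e3))
  refine ⟨δ, hδ, fun A β hA hβ => ?_⟩
  have hdist : dist ((A, β) : (Fin dbar → Fin d → ℝ) × (Fin dbar → ℝ)) p0 < δ := by
    refine max_lt ?_ ?_
    · exact (dist_pi_lt_iff hδ).2 fun i => (dist_pi_lt_iff hδ).2 fun j => hA i j
    · exact (dist_pi_lt_iff hδ).2 fun i => hβ i
  obtain ⟨g1, g2, g3⟩ := H hdist
  exact aux_det v A β ι g1 g2 g3
end

section
/- (Consistency of the LP solution.) Under the hypotheses of the LP stability result — the linear program min vᵀθ subject to Āθ ≤ β̄ has a unique optimal solution θ* with active set I₊ of exactly d elements, Ā⁺ invertible, and a dual vector λ* ≥ 0 with Āᵀλ* = −v vanishing off I₊ and strictly positive on I₊ — if (A_N)_{N≥1} and (β_N)_{N≥1} are sequences with A_N → Ā and β_N → β̄, then for all sufficiently large N the linear program min vᵀθ subject to A_N θ ≤ β_N has a unique optimal solution θ_N, and θ_N → θ* as N → ∞. -/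
open Matrix Filter

theorem tendsto_mulVec_aux {m n : ℕ} {M : ℕ → Matrix (Fin m) (Fin n) ℝ}
    {M' : Matrix (Fin m) (Fin n) ℝ} {x : ℕ → Fin n → ℝ} {x' : Fin n → ℝ}
    (hM : Tendsto M atTop (nhds M')) (hx : Tendsto x atTop (nhds x')) :
    Tendsto (fun N => M N *ᵥ x N) atTop (nhds (M' *ᵥ x')) := by
  refine tendsto_pi_nhds.2 fun i => ?_
  simp only [Matrix.mulVec, dotProduct]
  exact tendsto_finsetSum _ fun j _ =>
    (tendsto_pi_nhds.1 (tendsto_pi_nhds.1 hM i) j).mul (tendsto_pi_nhds.1 hx j)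

theorem tendsto_vecMul_aux {m n : ℕ} {M : ℕ → Matrix (Fin m) (Fin n) ℝ}
    {M' : Matrix (Fin m) (Fin n) ℝ} (w : Fin m → ℝ)
    (hM : Tendsto M atTop (nhds M')) :
    Tendsto (fun N => w ᵥ* M N) atTop (nhds (w ᵥ* M')) := by
  refine tendsto_pi_nhds.2 fun i => ?_
  simp only [Matrix.vecMul, dotProduct]
  exact tendsto_finsetSum _ fun j _ =>
    (tendsto_pi_nhds.1 (tendsto_pi_nhds.1 hM j) i).const_mul (w j)

theorem lp_cert {d dbar : ℕ} (v : Fin d → ℝ) (A : Matrix (Fin dbar) (Fin d) ℝ)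
    (β : Fin dbar → ℝ) (ι : Fin d → Fin dbar) (θ μ : Fin d → ℝ)
    (hB : IsUnit (A.submatrix ι id).det)
    (hθ : A.submatrix ι id *ᵥ θ = β ∘ ι)
    (hμ : μ ᵥ* A.submatrix ι id = -v) (hpos : ∀ k, 0 < μ k)
    (hoff : ∀ i, i ∉ Set.range ι → (A *ᵥ θ) i ≤ β i) :
    LPOptimal v A β θ ∧ ∀ θ', LPOptimal v A β θ' → θ' = θ := by
  have hval : ∀ x : Fin d → ℝ, v ⬝ᵥ x = - ∑ k, μ k * (A *ᵥ x) (ι k) := by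
    intro x
    have h1 : v = -(μ ᵥ* A.submatrix ι id) := by rw [hμ, neg_neg]
    rw [h1, neg_dotProduct, ← dotProduct_mulVec]
    rfl
  have hθ' : ∀ k, (A *ᵥ θ) (ι k) = β (ι k) := fun k => congrFun hθ k
  have hopt : LPOptimal v A β θ := by
    refine ⟨fun i => ?_, fun x hx => ?_⟩
    · by_cases hi : i ∈ Set.range ι
      · obtain ⟨k, rfl⟩ := hi
        exact (hθ' k).le
      · exact hoff i hi
    · rw [hval, hval]
      apply neg_le_neg
      apply Finset.sum_le_sum
      intro k _
      rw [hθ']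
      exact mul_le_mul_of_nonneg_left (hx _) (hpos k).le
  refine ⟨hopt, fun x hx => ?_⟩
  have heq : v ⬝ᵥ x = v ⬝ᵥ θ := le_antisymm (hx.2 θ hopt.1) (hopt.2 x hx.1)
  rw [hval, hval, neg_inj] at heq
  have hk := (Finset.sum_eq_sum_iff_of_le (s := Finset.univ) (fun k _ => by
      rw [hθ']
      exact mul_le_mul_of_nonneg_left (hx.1 _) (hpos k).le)).1 heq
  have hBx : A.submatrix ι id *ᵥ x = A.submatrix ι id *ᵥ θ := by
    funext k
    exact mul_left_cancel₀ (hpos k).ne' (hk k (Finset.mem_univ k))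
  exact Matrix.mulVec_injective_of_isUnit ((Matrix.isUnit_iff_isUnit_det _).2 hB) hBx

/-- Consistency of the LP solution: under the nondegeneracy hypotheses on the limiting
LP `min vᵀθ s.t. Āθ ≤ β̄` (unique optimizer `θ*`, active set of exactly `d` elements,
invertible `Ā⁺`, strictly complementary dual `λ*`), if `A_N → Ā` and `β_N → β̄`, then
for all sufficiently large `N` the LP `min vᵀθ s.t. A_N θ ≤ β_N` has a unique optimal
solution `θ_N`, and `θ_N → θ*`. -/
theorem stmt17 {d dbar : ℕ} (hd : 1 ≤ d) (hdd : d ≤ dbar)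
    (v : Fin d → ℝ) (Abar : Matrix (Fin dbar) (Fin d) ℝ) (βbar : Fin dbar → ℝ)
    (θstar : Fin d → ℝ)
    (hopt : LPOptimal v Abar βbar θstar)
    (huniq : ∀ θ : Fin d → ℝ, LPOptimal v Abar βbar θ → θ = θstar)
    (ι : Fin d → Fin dbar) (hι : Function.Injective ι)
    (hactive : {i : Fin dbar | Abar.mulVec θstar i = βbar i} = Set.range ι)
    (hAplus : IsUnit (Abar.submatrix ι id).det)
    (lam : Fin dbar → ℝ) (hlam0 : ∀ i, 0 ≤ lam i)
    (hdual : Abarᵀ.mulVec lam = -v)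
    (hlamoff : ∀ i, i ∉ Set.range ι → lam i = 0)
    (hlamon : ∀ i, i ∈ Set.range ι → 0 < lam i)
    (A : ℕ → Matrix (Fin dbar) (Fin d) ℝ) (β : ℕ → Fin dbar → ℝ)
    (hA : ∀ i j, Tendsto (fun N => A N i j) atTop (nhds (Abar i j)))
    (hβ : ∀ i, Tendsto (fun N => β N i) atTop (nhds (βbar i))) :
    ∃ (θseq : ℕ → Fin d → ℝ) (N₀ : ℕ),
      (∀ N ≥ N₀, LPOptimal v (A N) (β N) (θseq N) ∧
        ∀ θ : Fin d → ℝ, LPOptimal v (A N) (β N) θ → θ = θseq N) ∧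
      Tendsto θseq atTop (nhds θstar) := by
  have hA' : Tendsto A atTop (nhds Abar) :=
    tendsto_pi_nhds.2 fun i => tendsto_pi_nhds.2 fun j => hA i j
  have hβ' : Tendsto β atTop (nhds βbar) := tendsto_pi_nhds.2 hβ
  have hB : Tendsto (fun N => (A N).submatrix ι id) atTop (nhds (Abar.submatrix ι id)) :=
    tendsto_pi_nhds.2 fun i => tendsto_pi_nhds.2 fun j => hA (ι i) j
  have hdet : Tendsto (fun N => ((A N).submatrix ι id).det) atTop
      (nhds (Abar.submatrix ι id).det) :=
    ((continuous_id.matrix_det).tendsto _).comp hB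
  have hinv : Tendsto (fun N => ((A N).submatrix ι id)⁻¹) atTop
      (nhds (Abar.submatrix ι id)⁻¹) := by
    simp only [Matrix.inv_def, Ring.inverse_eq_inv']
    exact (hdet.inv₀ hAplus.ne_zero).smul (((continuous_id.matrix_adjugate).tendsto _).comp hB)
  have hβι : Tendsto (fun N => β N ∘ ι) atTop (nhds (βbar ∘ ι)) :=
    tendsto_pi_nhds.2 fun k => hβ (ι k)
  have hact : Abar.submatrix ι id *ᵥ θstar = βbar ∘ ι := by
    funext k
    have : ι k ∈ {i : Fin dbar | Abar.mulVec θstar i = βbar i} := by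
      rw [hactive]; exact ⟨k, rfl⟩
    exact this
  have hθlim : Tendsto (fun N => ((A N).submatrix ι id)⁻¹ *ᵥ (β N ∘ ι)) atTop (nhds θstar) := by
    have h1 : (Abar.submatrix ι id)⁻¹ *ᵥ (βbar ∘ ι) = θstar := by
      rw [← hact, Matrix.mulVec_mulVec, Matrix.nonsing_inv_mul _ hAplus, Matrix.one_mulVec]
    rw [← h1]
    exact tendsto_mulVec_aux hinv hβι
  have hlamB : (lam ∘ ι) ᵥ* Abar.submatrix ι id = -v := by
    rw [← hdual]
    funext j
    simp only [Matrix.vecMul, Matrix.mulVec, dotProduct, Matrix.transpose_apply,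
      Matrix.submatrix_apply, id, Function.comp]
    rw [← Finset.sum_subset (Finset.subset_univ (Finset.univ.map ⟨ι, hι⟩))]
    · simp [Finset.sum_map, mul_comm]
    · intro i _ hi
      rw [hlamoff i (by simpa using hi), mul_zero]
  have hμlim : Tendsto (fun N => (-v) ᵥ* ((A N).submatrix ι id)⁻¹) atTop (nhds (lam ∘ ι)) := by
    have h1 : (-v) ᵥ* (Abar.submatrix ι id)⁻¹ = lam ∘ ι := by
      rw [← hlamB, Matrix.vecMul_vecMul, Matrix.mul_nonsing_inv _ hAplus, Matrix.vecMul_one]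
    rw [← h1]
    exact tendsto_vecMul_aux _ hinv
  have e1 : ∀ᶠ N in atTop, ((A N).submatrix ι id).det ≠ 0 := hdet.eventually_ne hAplus.ne_zero
  have e2 : ∀ᶠ N in atTop, ∀ k, 0 < ((-v) ᵥ* ((A N).submatrix ι id)⁻¹) k :=
    eventually_all.2 fun k =>
      (tendsto_pi_nhds.1 hμlim k).eventually_const_lt (hlamon (ι k) ⟨k, rfl⟩)
  have hAθ : Tendsto (fun N => A N *ᵥ (((A N).submatrix ι id)⁻¹ *ᵥ (β N ∘ ι))) atTop
      (nhds (Abar *ᵥ θstar)) :=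
    tendsto_mulVec_aux hA' hθlim
  have e3 : ∀ᶠ N in atTop, ∀ i, i ∉ Set.range ι →
      (A N *ᵥ (((A N).submatrix ι id)⁻¹ *ᵥ (β N ∘ ι))) i ≤ β N i := by
    refine eventually_all.2 fun i => ?_
    by_cases hi : i ∈ Set.range ι
    · exact Eventually.of_forall fun N h => absurd hi h
    · have hlt : (Abar *ᵥ θstar) i < βbar i := by
        refine lt_of_le_of_ne (hopt.1 i) fun h => hi ?_
        rw [← hactive]; exact h
      filter_upwards [(tendsto_pi_nhds.1 hAθ i).eventually_lt (hβ i) hlt] with N hN _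
      exact hN.le
  obtain ⟨N₀, hN₀⟩ := eventually_atTop.1 (e1.and (e2.and e3))
  refine ⟨fun N => ((A N).submatrix ι id)⁻¹ *ᵥ (β N ∘ ι), N₀, fun N hN => ?_, hθlim⟩
  obtain ⟨h1, h2, h3⟩ := hN₀ N hN
  have hu : IsUnit ((A N).submatrix ι id).det := isUnit_iff_ne_zero.2 h1
  refine lp_cert v (A N) (β N) ι _ _ hu ?_ ?_ h2 h3
  · rw [Matrix.mulVec_mulVec, Matrix.mul_nonsing_inv _ hu, Matrix.one_mulVec]
  · rw [Matrix.vecMul_vecMul, Matrix.nonsing_inv_mul _ hu, Matrix.vecMul_one]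
end
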